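/- (Asymptotic Completeness of Surface Reduction) In Λ⊕^cbv with observations 𝒱_∼ (β_v-equivalence classes of values), a multidistribution 𝔪 has a reduction sequence converging to 𝝁 if and only if it has a surface reduction sequence converging to 𝝁. -/

import Mathlib

open scoped NNReal ENNReal

/-- A (raw) multidistribution on `X`: a finite multiset of weighted elements. -/
abbrev MDist (X : Type) := Multiset (ℝ≥0 × X)

namespace MDist

/-- Scalar multiplication of a multidistribution. -/
def scale {X : Type} (p : ℝ≥0) (m : MDist X) : MDist X :=
  m.map fun q => (p * q.1, q.2)

/-- The singleton multidistribution `[1 M]`. -/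
def single {X : Type} (M : X) : MDist X := {(1, M)}

/-- A multidistribution is proper when every weight lies in `(0,1]` and the
weights sum to at most `1`. -/
def Proper {X : Type} (m : MDist X) : Prop :=
  (∀ q ∈ m, 0 < q.1 ∧ q.1 ≤ 1) ∧ (m.map Prod.fst).sum ≤ 1

/-- The probability that the distribution associated to a multidistribution
assigns to an event `A`. -/
noncomputable def mass {X : Type} (m : MDist X) (A : Set X) : ℝ≥0∞ :=
  (m.map fun q => A.indicator (fun _ => (q.1 : ℝ≥0∞)) q.2).sum

end MDist

/-- One component of the lifting: either keep the term or perform a step. -/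
def LiftTerm {X : Type} (r : X → MDist X → Prop) (M : X) (m : MDist X) : Prop :=
  m = MDist.single M ∨ r M m

/-- The lifting of a relation `r ⊆ X × MDist X` to a binary relation on
multidistributions. -/
inductive Lift {X : Type} (r : X → MDist X → Prop) : MDist X → MDist X → Prop
  | nil : Lift r 0 0
  | cons {p : ℝ≥0} {M : X} {m s t : MDist X} :
      LiftTerm r M m → Lift r s t → Lift r ((p, M) ::ₘ s) (MDist.scale p m + t)
/-- Terms of `Λ⊕` (de Bruijn representation). -/
inductive Term : Type
  | var : ℕ → Term
  | lam : Term → Term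
  | app : Term → Term → Term
  | choice : Term → Term → Term
deriving DecidableEq

namespace Term

/-- Shifting of de Bruijn indices above a cutoff. -/
def liftAux (c : ℕ) : Term → Term
  | var k => if k < c then var k else var (k + 1)
  | lam M => lam (liftAux (c + 1) M)
  | app M N => app (liftAux c M) (liftAux c N)
  | choice M N => choice (liftAux c M) (liftAux c N)

/-- Capture-avoiding substitution `M[N/j]`. -/
def subst : Term → ℕ → Term → Term
  | var k, j, N => if k = j then N else if j < k then var (k - 1) else var k
  | lam M, j, N => lam (subst M (j + 1) (liftAux 0 N))
  | app M P, j, N => app (subst M j N) (subst P j N)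
  | choice M P, j, N => choice (subst M j N) (subst P j N)

/-- Values: variables and abstractions. -/
inductive IsValue : Term → Prop
  | var (n : ℕ) : IsValue (var n)
  | lam (M : Term) : IsValue (lam M)

/-- `β_v`-reduction, closed under arbitrary contexts. -/
inductive BetaStep : Term → Term → Prop
  | beta {M V : Term} : IsValue V → BetaStep (app (lam M) V) (subst M 0 V)
  | appL {M M' N : Term} : BetaStep M M' → BetaStep (app M N) (app M' N)
  | appR {M N N' : Term} : BetaStep N N' → BetaStep (app M N) (app M N')
  | lam {M M' : Term} : BetaStep M M' → BetaStep (lam M) (lam M')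
  | chL {M M' N : Term} : BetaStep M M' → BetaStep (choice M N) (choice M' N)
  | chR {M N N' : Term} : BetaStep N N' → BetaStep (choice M N) (choice M N')

/-- Surface `β_v`-reduction: closure under surface contexts `S ::= □ | MS | SM`. -/
inductive SurfBetaStep : Term → Term → Prop
  | beta {M V : Term} : IsValue V → SurfBetaStep (app (lam M) V) (subst M 0 V)
  | appL {M M' N : Term} : SurfBetaStep M M' → SurfBetaStep (app M N) (app M' N)
  | appR {M N N' : Term} : SurfBetaStep N N' → SurfBetaStep (app M N) (app M N')

/-- `PlusStep M A B` holds when `M = S(P ⊕ Q)`, `A = S(P)`, `B = S(Q)` for a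
surface context `S ::= □ | MS | SM`. -/
inductive PlusStep : Term → Term → Term → Prop
  | choice {M N : Term} : PlusStep (choice M N) M N
  | appL {M A B N : Term} : PlusStep M A B → PlusStep (app M N) (app A N) (app B N)
  | appR {M N A B : Term} : PlusStep N A B → PlusStep (app M N) (app M A) (app M B)

end Term

open Term

/-- The reduction `→_{β_v} ⊆ Λ⊕ × MDST(Λ⊕)`. -/
def betaRed (M : Term) (m : MDist Term) : Prop :=
  ∃ N, BetaStep M N ∧ m = MDist.single N

/-- The probabilistic reduction `→_⊕ ⊆ Λ⊕ × MDST(Λ⊕)`. -/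
def plusRed (M : Term) (m : MDist Term) : Prop :=
  ∃ A B, PlusStep M A B ∧ m = {((1 : ℝ≥0) / 2, A), ((1 : ℝ≥0) / 2, B)}

/-- The full reduction `→ = →_{β_v} ∪ →_⊕`. -/
def red (M : Term) (m : MDist Term) : Prop := betaRed M m ∨ plusRed M m

/-- Surface reduction `→ₛ`: β_v and ⊕ rules closed under surface contexts. -/
def surfRed (M : Term) (m : MDist Term) : Prop :=
  (∃ N, SurfBetaStep M N ∧ m = MDist.single N) ∨ plusRed M m

/-- A step is deep when it is not a surface step. -/
def deepRed (M : Term) (m : MDist Term) : Prop := red M m ∧ ¬ surfRed M m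

/-- `β_v`-equivalence: reflexive-symmetric-transitive closure of β_v-reduction. -/
def BetaEq : Term → Term → Prop := Relation.EqvGen BetaStep

/-- The event `𝐕`: values β_v-equivalent to the value `V`. -/
def VClass (V : Term) : Set Term := {W | IsValue W ∧ BetaEq W V}

/-- Convergence of a sequence of multidistributions to a limit assignment on
the events `𝒱_∼`. -/
def ConvergesV (ms : ℕ → MDist Term) (ρ : Term → ℝ≥0∞) : Prop :=
  ∀ V : Term, IsValue V → ρ V = ⨆ n, MDist.mass (ms n) (VClass V)

namespace AsympAux

theorem rtg_map {α β : Type} {r : α → α → Prop} {q : β → β → Prop} {a b : α} (f : α → β)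
    (h : ∀ x y, r x y → q (f x) (f y)) (hab : Relation.ReflTransGen r a b) :
    Relation.ReflTransGen q (f a) (f b) := by
  induction hab with
  | refl => exact .refl
  | tail _ h1 ih => exact ih.tail (h _ _ h1)

theorem lift_lift (M : Term) : ∀ i j, i ≤ j →
    liftAux (j + 1) (liftAux i M) = liftAux i (liftAux j M) := by
  induction M with
  | var k =>
    intro i j h
    simp only [liftAux]
    split_ifs <;> simp only [liftAux] <;> split_ifs <;> first | rfl | omega
  | lam M ih => intro i j h; simp only [liftAux]; rw [ih (i + 1) (j + 1) (by omega)]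
  | app M N ihM ihN => intro i j h; simp only [liftAux]; rw [ihM i j h, ihN i j h]
  | choice M N ihM ihN => intro i j h; simp only [liftAux]; rw [ihM i j h, ihN i j h]

theorem lift_subst_ge (M : Term) : ∀ (N : Term) c j, j ≤ c →
    liftAux c (subst M j N) = subst (liftAux (c + 1) M) j (liftAux c N) := by
  induction M with
  | var k =>
    intro N c j h
    simp only [liftAux, subst]
    split_ifs <;> simp only [liftAux, subst] <;> split_ifs <;>
      first | rfl | omega | (congr 1; omega)
  | lam M ih =>
    intro N c j h
    simp only [liftAux, subst]
    rw [ih _ (c + 1) (j + 1) (by omega), lift_lift N 0 c (by omega)]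
  | app M N ihM ihN => intro V c j h; simp only [liftAux, subst]; rw [ihM _ _ _ h, ihN _ _ _ h]
  | choice M N ihM ihN => intro V c j h; simp only [liftAux, subst]; rw [ihM _ _ _ h, ihN _ _ _ h]

theorem lift_subst_le (M : Term) : ∀ (N : Term) c j, c ≤ j →
    liftAux c (subst M j N) = subst (liftAux c M) (j + 1) (liftAux c N) := by
  induction M with
  | var k =>
    intro N c j h
    simp only [liftAux, subst]
    split_ifs <;> simp only [liftAux, subst] <;> split_ifs <;>
      first | rfl | omega | (congr 1; omega)
  | lam M ih =>
    intro N c j h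
    simp only [liftAux, subst]
    rw [ih _ (c + 1) (j + 1) (by omega), lift_lift N 0 c (by omega)]
  | app M N ihM ihN => intro V c j h; simp only [liftAux, subst]; rw [ihM _ _ _ h, ihN _ _ _ h]
  | choice M N ihM ihN => intro V c j h; simp only [liftAux, subst]; rw [ihM _ _ _ h, ihN _ _ _ h]

theorem subst_lift (M : Term) : ∀ (N : Term) i, subst (liftAux i M) i N = M := by
  induction M with
  | var k =>
    intro N i
    simp only [liftAux]
    split_ifs <;> simp only [subst] <;> split_ifs <;> first | rfl | omega
  | lam M ih => intro N i; simp only [liftAux, subst]; rw [ih]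
  | app M N ihM ihN => intro V i; simp only [liftAux, subst]; rw [ihM, ihN]
  | choice M N ihM ihN => intro V i; simp only [liftAux, subst]; rw [ihM, ihN]

theorem subst_subst (M : Term) : ∀ (U V : Term) i j, i ≤ j →
    subst (subst M i U) j V = subst (subst M (j + 1) (liftAux i V)) i (subst U j V) := by
  induction M with
  | var k =>
    intro U V i j h
    rcases lt_trichotomy k i with hk | hk | hk
    · have h1 : ¬ k = i := by omega
      have h2 : ¬ i < k := by omega
      have h3 : ¬ k = j := by omega
      have h4 : ¬ j < k := by omega
      have h5 : ¬ k = j + 1 := by omega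
      have h6 : ¬ j + 1 < k := by omega
      simp only [subst, h1, h2, h3, h4, h5, h6, if_false]
    · subst hk
      have h5 : ¬ k = j + 1 := by omega
      have h6 : ¬ j + 1 < k := by omega
      simp only [subst, h5, h6, if_false, if_true]
    · have h1 : ¬ k = i := by omega
      rcases lt_trichotomy k (j + 1) with hj | hj | hj
      · have h3 : ¬ k - 1 = j := by omega
        have h4 : ¬ j < k - 1 := by omega
        have h5 : ¬ k = j + 1 := by omega
        have h6 : ¬ j + 1 < k := by omega
        simp only [subst, h1, hk, h3, h4, h5, h6, if_false, if_true]
      · subst hj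
        simp only [subst, h1, hk, if_false, if_true, Nat.add_sub_cancel, subst_lift]
      · have h3 : ¬ k - 1 = j := by omega
        have h4 : j < k - 1 := by omega
        have h5 : ¬ k = j + 1 := by omega
        have h7 : ¬ k - 1 = i := by omega
        have h8 : i < k - 1 := by omega
        simp only [subst, h1, hk, h3, h4, h5, hj, h7, h8, if_false, if_true]
  | lam M ih =>
    intro U V i j h
    simp only [subst]
    rw [ih _ _ (i + 1) (j + 1) (by omega), lift_lift V 0 i (by omega),
      lift_subst_le U V 0 j (by omega)]
  | app M N ihM ihN => intro U V i j h; simp only [subst]; rw [ihM _ _ _ _ h, ihN _ _ _ _ h]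
  | choice M N ihM ihN => intro U V i j h; simp only [subst]; rw [ihM _ _ _ _ h, ihN _ _ _ _ h]

theorem value_lift {V : Term} (h : IsValue V) (c : ℕ) : IsValue (liftAux c V) := by
  cases h with
  | var n => simp only [liftAux]; split_ifs <;> constructor
  | lam M => constructor

theorem value_subst {V W : Term} (h : IsValue V) (hW : IsValue W) (j : ℕ) :
    IsValue (subst V j W) := by
  cases h with
  | var n =>
    simp only [subst]
    split_ifs
    · exact hW
    · constructor
    · constructor
  | lam M => constructor

theorem surf_lift {M N : Term} (h : SurfBetaStep M N) (c : ℕ) :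
    SurfBetaStep (liftAux c M) (liftAux c N) := by
  induction h with
  | @beta M V hV =>
    rw [lift_subst_ge M V c 0 (by omega)]
    exact SurfBetaStep.beta (value_lift hV c)
  | appL _ ih => exact SurfBetaStep.appL ih
  | appR _ ih => exact SurfBetaStep.appR ih

theorem surf_subst {M N V : Term} (h : SurfBetaStep M N) (hV : IsValue V) (j : ℕ) :
    SurfBetaStep (subst M j V) (subst N j V) := by
  induction h with
  | @beta M U hU =>
    rw [subst_subst M U V 0 j (by omega)]
    exact SurfBetaStep.beta (value_subst hU hV j)
  | appL _ ih => exact SurfBetaStep.appL ih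
  | appR _ ih => exact SurfBetaStep.appR ih

/-- Many-step surface beta reduction. -/
abbrev SStar : Term → Term → Prop := Relation.ReflTransGen SurfBetaStep

theorem sstar_lift {M N : Term} (h : SStar M N) (c : ℕ) : SStar (liftAux c M) (liftAux c N) :=
  rtg_map (liftAux c) (fun _ _ h => surf_lift h c) h

theorem sstar_subst {M N V : Term} (h : SStar M N) (hV : IsValue V) (j : ℕ) :
    SStar (subst M j V) (subst N j V) :=
  rtg_map (fun X => subst X j V) (fun _ _ h => surf_subst h hV j) h

theorem sstar_appL {M M' : Term} (N : Term) (h : SStar M M') : SStar (app M N) (app M' N) :=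
  rtg_map (fun X => app X N) (fun _ _ h => SurfBetaStep.appL h) h

theorem sstar_appR {N N' : Term} (M : Term) (h : SStar N N') : SStar (app M N) (app M N') :=
  rtg_map (fun X => app M X) (fun _ _ h => SurfBetaStep.appR h) h

/-- Standard reduction. -/
inductive St : Term → Term → Prop
  | var {M : Term} {n : ℕ} : SStar M (Term.var n) → St M (Term.var n)
  | lam {M P P' : Term} : SStar M (Term.lam P) → St P P' → St M (Term.lam P')
  | app {M P P' Q Q' : Term} : SStar M (Term.app P Q) → St P P' → St Q Q' → St M (Term.app P' Q')
  | choice {M P P' Q Q' : Term} : SStar M (Term.choice P Q) → St P P' → St Q Q' →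
      St M (Term.choice P' Q')

theorem St.refl (M : Term) : St M M := by
  induction M with
  | var k => exact St.var .refl
  | lam M ih => exact St.lam .refl ih
  | app M N ihM ihN => exact St.app .refl ihM ihN
  | choice M N ihM ihN => exact St.choice .refl ihM ihN

theorem St.head {M M' N : Term} (h : SStar M M') (hs : St M' N) : St M N := by
  cases hs with
  | var h1 => exact St.var (h.trans h1)
  | lam h1 h2 => exact St.lam (h.trans h1) h2
  | app h1 h2 h3 => exact St.app (h.trans h1) h2 h3
  | choice h1 h2 h3 => exact St.choice (h.trans h1) h2 h3

theorem St.lift {M N : Term} (h : St M N) : ∀ c, St (liftAux c M) (liftAux c N) := by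
  induction h with
  | var h1 => intro c; exact St.head (sstar_lift h1 c) (St.refl _)
  | lam h1 _ ih => intro c; exact St.lam (sstar_lift h1 c) (ih (c + 1))
  | app h1 _ _ ih1 ih2 => intro c; exact St.app (sstar_lift h1 c) (ih1 c) (ih2 c)
  | choice h1 _ _ ih1 ih2 => intro c; exact St.choice (sstar_lift h1 c) (ih1 c) (ih2 c)

theorem St.subst {M N : Term} (h : St M N) : ∀ {V V' : Term} (j : ℕ), IsValue V → St V V' →
    St (Term.subst M j V) (Term.subst N j V') := by
  induction h with
  | @var M n h1 =>
    intro V V' j hV hs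
    refine St.head (sstar_subst h1 hV j) ?_
    simp only [Term.subst]
    split_ifs
    · exact hs
    · exact St.refl _
    · exact St.refl _
  | lam h1 _ ih =>
    intro V V' j hV hs
    exact St.lam (sstar_subst h1 hV j) (ih (j + 1) (value_lift hV 0) (hs.lift 0))
  | app h1 _ _ ih1 ih2 =>
    intro V V' j hV hs
    exact St.app (sstar_subst h1 hV j) (ih1 j hV hs) (ih2 j hV hs)
  | choice h1 _ _ ih1 ih2 =>
    intro V V' j hV hs
    exact St.choice (sstar_subst h1 hV j) (ih1 j hV hs) (ih2 j hV hs)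

theorem St.value {M V : Term} (h : St M V) (hV : IsValue V) :
    ∃ W, SStar M W ∧ IsValue W ∧ St W V := by
  cases hV with
  | var n => cases h with
    | var h1 => exact ⟨_, h1, .var n, St.refl _⟩
  | lam P => cases h with
    | lam h1 h2 => exact ⟨_, h1, .lam _, St.lam .refl h2⟩

theorem St.step {N N' : Term} (hb : BetaStep N N') : ∀ {M : Term}, St M N → St M N' := by
  induction hb with
  | @beta R W hW =>
    intro M h
    cases h with
    | app h1 h2 h3 =>
      cases h2 with
      | lam h4 h5 =>
        obtain ⟨Q, hQ, hQv, hQs⟩ := h3.value hW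
        refine St.head ?_ (St.subst h5 0 hQv hQs)
        exact ((h1.trans (sstar_appL _ h4)).trans (sstar_appR _ hQ)).tail (SurfBetaStep.beta hQv)
  | appL _ ih => intro M h; cases h with
    | app h1 h2 h3 => exact St.app h1 (ih h2) h3
  | appR _ ih => intro M h; cases h with
    | app h1 h2 h3 => exact St.app h1 h2 (ih h3)
  | lam _ ih => intro M h; cases h with
    | lam h1 h2 => exact St.lam h1 (ih h2)
  | chL _ ih => intro M h; cases h with
    | choice h1 h2 h3 => exact St.choice h1 (ih h2) h3
  | chR _ ih => intro M h; cases h with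
    | choice h1 h2 h3 => exact St.choice h1 h2 (ih h3)

theorem St.plus {N A B : Term} (hp : PlusStep N A B) : ∀ {M : Term}, St M N →
    ∃ M' A' B', SStar M M' ∧ PlusStep M' A' B' ∧ St A' A ∧ St B' B := by
  induction hp with
  | choice => intro M h; cases h with
    | choice h1 h2 h3 => exact ⟨_, _, _, h1, .choice, h2, h3⟩
  | appL _ ih => intro M h; cases h with
    | app h1 h2 h3 =>
      obtain ⟨M', A', B', hs, hp, ha, hb⟩ := ih h2
      exact ⟨_, _, _, h1.trans (sstar_appL _ hs), .appL hp, St.app .refl ha h3, St.app .refl hb h3⟩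
  | appR _ ih => intro M h; cases h with
    | app h1 h2 h3 =>
      obtain ⟨M', A', B', hs, hp, ha, hb⟩ := ih h3
      exact ⟨_, _, _, h1.trans (sstar_appR _ hs), .appR hp, St.app .refl h2 ha, St.app .refl h2 hb⟩

theorem surf_beta {M N : Term} (h : SurfBetaStep M N) : BetaStep M N := by
  induction h with
  | beta hV => exact .beta hV
  | appL _ ih => exact .appL ih
  | appR _ ih => exact .appR ih

/-- Many-step beta reduction. -/
abbrev BStar : Term → Term → Prop := Relation.ReflTransGen BetaStep

theorem sstar_bstar {M N : Term} (h : SStar M N) : BStar M N :=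
  rtg_map id (fun _ _ h => surf_beta h) h

theorem St.bstar {M N : Term} (h : St M N) : BStar M N := by
  induction h with
  | var h1 => exact sstar_bstar h1
  | lam h1 _ ih =>
    exact (sstar_bstar h1).trans (rtg_map Term.lam (fun _ _ h => .lam h) ih)
  | @app M P P' Q Q' h1 _ _ ih1 ih2 =>
    exact ((sstar_bstar h1).trans
      (rtg_map (fun X => Term.app X Q) (fun _ _ h => .appL h) ih1)).trans
      (rtg_map (fun X => Term.app P' X) (fun _ _ h => .appR h) ih2)
  | @choice M P P' Q Q' h1 _ _ ih1 ih2 =>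
    exact ((sstar_bstar h1).trans
      (rtg_map (fun X => Term.choice X Q) (fun _ _ h => .chL h) ih1)).trans
      (rtg_map (fun X => Term.choice P' X) (fun _ _ h => .chR h) ih2)

theorem bstar_eq {M N : Term} (h : BStar M N) : BetaEq M N := by
  induction h with
  | refl => exact .refl _
  | tail _ h ih => exact .trans _ _ _ ih (.rel _ _ h)

theorem value_beta {M N : Term} (h : BetaStep M N) (hM : IsValue M) : IsValue N := by
  cases hM with
  | var n => cases h
  | lam P => cases h with
    | lam h => exact .lam _

theorem value_bstar {M N : Term} (h : BStar M N) (hM : IsValue M) : IsValue N := by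
  induction h with
  | refl => exact hM
  | tail _ h ih => exact value_beta h ih

/-- Standard reduction whose surface part is complete as far as values are concerned. -/
def R (M N : Term) : Prop := St M N ∧ (IsValue N → IsValue M)

theorem St.toR {M N : Term} (h : St M N) : ∃ M', SStar M M' ∧ R M' N := by
  by_cases hN : IsValue N
  · obtain ⟨W, h1, h2, h3⟩ := h.value hN
    exact ⟨W, h1, h3, fun _ => h2⟩
  · exact ⟨M, .refl, h, fun h => absurd h hN⟩

theorem R.vclass {M N : Term} (h : R M N) (V : Term) : M ∈ VClass V ↔ N ∈ VClass V := by
  have hb := h.1.bstar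
  constructor
  · rintro ⟨h1, h2⟩
    exact ⟨value_bstar hb h1, .trans _ _ _ (.symm _ _ (bstar_eq hb)) h2⟩
  · rintro ⟨h1, h2⟩
    exact ⟨h.2 h1, .trans _ _ _ (bstar_eq hb) h2⟩

/-- Pointwise relation on multidistributions. -/
abbrev LR : MDist Term → MDist Term → Prop :=
  Multiset.Rel (fun a b => a.1 = b.1 ∧ R a.2 b.2)

theorem LR.mass {r m : MDist Term} (h : LR r m) (V : Term) :
    MDist.mass r (VClass V) = MDist.mass m (VClass V) := by
  induction h with
  | zero => rfl
  | @cons a b as bs h _ ih =>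
    unfold MDist.mass at *
    rw [Multiset.map_cons, Multiset.map_cons, Multiset.sum_cons, Multiset.sum_cons, ih]
    congr 1
    classical
    simp only [Set.indicator_apply, h.2.vclass V, h.1]

theorem lift_refl {r : Term → MDist Term → Prop} (m : MDist Term) : Lift r m m := by
  induction m using Multiset.induction with
  | empty => exact .nil
  | cons a s ih =>
    have := Lift.cons (p := a.1) (M := a.2) (.inl rfl) ih
    simpa [MDist.scale, MDist.single] using this

theorem lift_add {r : Term → MDist Term → Prop} {a b c d : MDist Term}
    (h : Lift r a b) (h' : Lift r c d) : Lift r (a + c) (b + d) := by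
  induction h with
  | nil => simpa using h'
  | cons h1 _ ih =>
    rw [Multiset.cons_add, add_assoc]
    exact .cons h1 ih

/-- Many-step lifted surface reduction. -/
abbrev LS : MDist Term → MDist Term → Prop := Relation.ReflTransGen (Lift surfRed)

theorem LS.add {a b c d : MDist Term} (h : LS a b) (h' : LS c d) : LS (a + c) (b + d) :=
  (rtg_map (fun x => x + c) (fun _ _ h => lift_add h (lift_refl c)) h).trans
    (rtg_map (fun x => b + x) (fun _ _ h => lift_add (lift_refl b) h) h')

theorem lift_one {r : Term → MDist Term → Prop} {M : Term} {m : MDist Term} (p : ℝ≥0)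
    (h : r M m) : Lift r {(p, M)} (MDist.scale p m) := by
  have := Lift.cons (p := p) (M := M) (.inr h) Lift.nil
  simpa using this

theorem sstar_LS {M N : Term} (p : ℝ≥0) (h : SStar M N) : LS {(p, M)} {(p, N)} := by
  refine rtg_map (fun X => ({(p, X)} : MDist Term)) (fun a b h => ?_) h
  have := lift_one (r := surfRed) p (.inl ⟨b, h, rfl⟩ : surfRed a (MDist.single b))
  simpa [MDist.scale, MDist.single] using this

theorem LR.one {M N : Term} (p : ℝ≥0) (h : R M N) : LR {(p, M)} {(p, N)} :=
  Multiset.Rel.cons ⟨rfl, h⟩ Multiset.Rel.zero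

theorem St.sim_one {M N : Term} (p : ℝ≥0) (h : St M N) :
    ∃ x, LS {(p, M)} x ∧ LR x {(p, N)} := by
  obtain ⟨M', h1, h2⟩ := h.toR
  exact ⟨_, sstar_LS p h1, LR.one p h2⟩

theorem sim_term {M N : Term} {n : MDist Term} (p : ℝ≥0) (h : St M N) (hl : LiftTerm red N n) :
    ∃ x, LS {(p, M)} x ∧ LR x (MDist.scale p n) := by
  have hs : ∀ X : Term, MDist.scale p (MDist.single X) = {(p, X)} := by
    intro X; simp [MDist.scale, MDist.single]
  rcases hl with rfl | ⟨N', hb, rfl⟩ | ⟨A, B, hp, rfl⟩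
  · rw [hs]; exact h.sim_one p
  · rw [hs]; exact (h.step hb).sim_one p
  · obtain ⟨M', A', B', h1, h2, h3, h4⟩ := h.plus hp
    have key : ∀ C D : Term, MDist.scale p {((1 : ℝ≥0) / 2, C), ((1 : ℝ≥0) / 2, D)} =
        ({(p * (1 / 2), C)} : MDist Term) + {(p * (1 / 2), D)} := by
      intro C D
      simp [MDist.scale]
    obtain ⟨x, hx1, hx2⟩ := h3.sim_one (p * (1 / 2))
    obtain ⟨y, hy1, hy2⟩ := h4.sim_one (p * (1 / 2))
    refine ⟨x + y, ?_, ?_⟩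
    · have hstep := lift_one (r := surfRed) p (.inr ⟨A', B', h2, rfl⟩)
      rw [key] at hstep
      exact ((sstar_LS p h1).tail hstep).trans (LS.add hx1 hy1)
    · rw [key]; exact Multiset.Rel.add hx2 hy2

theorem sim {m m' : MDist Term} (h : Lift red m m') : ∀ {r : MDist Term}, LR r m →
    ∃ r', LS r r' ∧ LR r' m' := by
  induction h with
  | nil =>
    intro r hr
    exact ⟨r, .refl, hr⟩
  | @cons p M n s t h1 _ ih =>
    intro r hr
    obtain ⟨⟨q, M'⟩, r0, ⟨h3, h4⟩, h5, rfl⟩ := Multiset.rel_cons_right.1 hr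
    obtain ⟨y, hy1, hy2⟩ := ih h5
    simp only at h3 h4
    subst h3
    obtain ⟨x, hx1, hx2⟩ := sim_term q h4.1 h1
    exact ⟨x + y, LS.add hx1 hy1, Multiset.Rel.add hx2 hy2⟩

theorem LR.refl (m : MDist Term) : LR m m :=
  Multiset.rel_refl_of_refl_on fun _ _ => ⟨rfl, St.refl _, id⟩

theorem surf_not_value {M : Term} {m : MDist Term} (h : surfRed M m) : ¬ IsValue M := by
  intro hv
  rcases h with ⟨N, h, _⟩ | ⟨A, B, h, _⟩
  · cases hv <;> cases h
  · cases hv <;> cases h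

theorem mass_mono {m m' : MDist Term} (h : Lift surfRed m m') (V : Term) :
    MDist.mass m (VClass V) ≤ MDist.mass m' (VClass V) := by
  induction h with
  | nil => exact le_rfl
  | @cons p M n s t h1 _ ih =>
    unfold MDist.mass at *
    rw [Multiset.map_cons, Multiset.sum_cons, Multiset.map_add, Multiset.sum_add]
    refine add_le_add ?_ ih
    rcases h1 with rfl | h1
    · simp [MDist.scale, MDist.single]
    · have : M ∉ VClass V := fun h => surf_not_value h1 h.1
      simp [this]

theorem path {α : Type} {r : α → α → Prop} (hr : ∀ a, r a a) {a b : α}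
    (h : Relation.ReflTransGen r a b) :
    ∃ (p : ℕ → α) (l : ℕ), p 0 = a ∧ (∀ i, l ≤ i → p i = b) ∧ ∀ i, r (p i) (p (i + 1)) := by
  induction h using Relation.ReflTransGen.head_induction_on with
  | refl => exact ⟨fun _ => b, 0, rfl, fun _ _ => rfl, fun _ => hr b⟩
  | @head a c h1 _ ih =>
    obtain ⟨p, l, h2, h3, h4⟩ := ih
    refine ⟨fun i => Nat.casesOn i a p, l + 1, rfl, ?_, ?_⟩
    · intro i hi
      cases i with
      | zero => omega
      | succ i => exact h3 i (by omega)
    · intro i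
      cases i with
      | zero => simpa [h2] using h1
      | succ i => exact h4 i

theorem flatten {α : Type} {r : α → α → Prop} (hr : ∀ a, r a a) (f : ℕ → α)
    (hf : ∀ n, Relation.ReflTransGen r (f n) (f (n + 1))) :
    ∃ g : ℕ → α, g 0 = f 0 ∧ (∀ n, r (g n) (g (n + 1))) ∧ (∀ n, ∃ k, g k = f n) ∧
      ∀ k, ∃ n, Relation.ReflTransGen r (g k) (f n) := by
  choose p l h0 hl hs using fun n => path hr (hf n)
  let next : ℕ × ℕ → ℕ × ℕ := fun s => if s.2 < l s.1 then (s.1, s.2 + 1) else (s.1 + 1, 0)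
  let st : ℕ → ℕ × ℕ := fun k => next^[k] (0, 0)
  have hst : ∀ k, st (k + 1) = next (st k) := fun k => Function.iterate_succ_apply' _ _ _
  have reach : ∀ n k, st k = (n, 0) → ∀ i, i ≤ l n → st (k + i) = (n, i) := by
    intro n k hk i
    induction i with
    | zero => intro _; exact hk
    | succ i ih =>
      intro hi
      rw [← add_assoc, hst, ih (by omega)]
      have : i < l n := by omega
      simp [next, this]
  have reach0 : ∀ n, ∃ k, st k = (n, 0) := by
    intro n
    induction n with
    | zero => exact ⟨0, rfl⟩
    | succ n ih =>
      obtain ⟨k, hk⟩ := ih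
      refine ⟨k + l n + 1, ?_⟩
      rw [hst, reach n k hk (l n) le_rfl]
      simp [next]
  refine ⟨fun k => p (st k).1 (st k).2, h0 0, ?_, ?_, ?_⟩
  · intro k
    simp only [hst]
    by_cases h : (st k).2 < l (st k).1
    · simp only [next, h, if_true]
      exact hs _ _
    · simp only [next, h, if_false]
      rw [h0, hl _ _ (not_lt.1 h)]
      exact hr _
  · intro n
    obtain ⟨k, hk⟩ := reach0 n
    exact ⟨k, by simp only [hk, h0]⟩
  · intro k
    refine ⟨(st k).1 + 1, ?_⟩
    have : ∀ d, Relation.ReflTransGen r (p (st k).1 (st k).2) (p (st k).1 ((st k).2 + d)) := by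
      intro d
      induction d with
      | zero => exact .refl
      | succ d ih => exact ih.tail (hs _ _)
    have h := this (l (st k).1)
    rwa [hl _ _ (Nat.le_add_left _ _)] at h

theorem LS.mass_mono {m m' : MDist Term} (h : LS m m') (V : Term) :
    MDist.mass m (VClass V) ≤ MDist.mass m' (VClass V) := by
  induction h with
  | refl => exact le_rfl
  | tail _ h ih => exact ih.trans (AsympAux.mass_mono h V)

theorem lift_surf_red {m m' : MDist Term} (h : Lift surfRed m m') : Lift red m m' := by
  induction h with
  | nil => exact .nil
  | cons h1 _ ih =>
    refine .cons ?_ ih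
    rcases h1 with h | ⟨N, h, rfl⟩ | h
    · exact .inl h
    · exact .inr (.inl ⟨N, surf_beta h, rfl⟩)
    · exact .inr (.inr h)

end AsympAux

open AsympAux

/-- Asymptotic completeness of surface reduction for `Λ⊕^cbv` with
observations `𝒱_∼`: a limit distribution is reachable by some reduction
sequence iff it is reachable by a surface reduction sequence. -/
theorem asymptotic_completeness_surface (m : MDist Term) (ρ : Term → ℝ≥0∞) :
    (∃ ms : ℕ → MDist Term, ms 0 = m ∧ (∀ n, Lift red (ms n) (ms (n + 1))) ∧
      ConvergesV ms ρ) ↔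
    (∃ ms : ℕ → MDist Term, ms 0 = m ∧ (∀ n, Lift surfRed (ms n) (ms (n + 1))) ∧
      ConvergesV ms ρ) := by
  constructor
  · rintro ⟨ms, rfl, hstep, hconv⟩
    have ex : ∀ n, ∀ r : {r : MDist Term // LR r (ms n)},
        ∃ r' : {r : MDist Term // LR r (ms (n + 1))}, LS r.1 r'.1 := by
      intro n r
      obtain ⟨r', h1, h2⟩ := sim (hstep n) r.2
      exact ⟨⟨r', h2⟩, h1⟩
    choose nxt hnxt using ex
    let F : ∀ n, {r : MDist Term // LR r (ms n)} :=
      fun n => Nat.rec ⟨ms 0, LR.refl _⟩ (fun n r => nxt n r) n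
    obtain ⟨g, g0, gs, g1, g2⟩ := flatten (r := Lift surfRed) lift_refl (fun n => (F n).1)
      (fun n => hnxt n (F n))
    refine ⟨g, g0, gs, fun V hV => ?_⟩
    rw [hconv V hV]
    apply le_antisymm
    · refine iSup_le fun n => ?_
      obtain ⟨k, hk⟩ := g1 n
      rw [← (F n).2.mass V, ← hk]
      exact le_iSup (fun n => MDist.mass (g n) (VClass V)) k
    · refine iSup_le fun k => ?_
      obtain ⟨n, hn⟩ := g2 k
      refine (LS.mass_mono hn V).trans ?_
      rw [(F n).2.mass V]
      exact le_iSup (fun n => MDist.mass (ms n) (VClass V)) n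
  · rintro ⟨ms, h0, hstep, hconv⟩
    exact ⟨ms, h0, fun n => lift_surf_red (hstep n), hconv⟩
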